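/- Let v : ℝ → ℝ be a C⁴ positive solution of the ODE v''''(t) − A·v''(t) + B·v(t) = g(v(t)) with v'(0) = 0 and v'''(0) = 0. Assume that either (v(0) ≥ a₀ and v''(0) ≥ 0) or (v(0) ≤ a₀ and v''(0) ≤ 0). Then v is the constant function a₀. -/

import Mathlib

open Real Filter Set

noncomputable section

/-- Conditions (G) on the nonlinearity `g`, extended to `[0,∞)` by `g 0 = 0`. -/
def CondG (n : ℕ) (g : ℝ → ℝ) : Prop :=
  ContDiffOn ℝ 1 g (Set.Ioi 0) ∧
  (∀ t > 0, 0 < g t) ∧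
  Filter.Tendsto g (nhdsWithin 0 (Set.Ioi 0)) (nhds 0) ∧
  (∀ t > 0, g t / t < deriv g t ∧ deriv g t ≤ (((n : ℝ) + 4) / ((n : ℝ) - 4)) * (g t / t)) ∧
  (∃ β : ℝ, 0 ≤ β ∧ β < (n : ℝ) ^ 2 * ((n : ℝ) - 4) ^ 2 / 16 ∧
    Filter.Tendsto (deriv g) (nhdsWithin 0 (Set.Ioi 0)) (nhds β)) ∧
  (∃ q c : ℝ, 1 < q ∧ 0 < c ∧ ∀ t ≥ 1, c * t ^ q ≤ g t) ∧
  g 0 = 0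

/-- `v` solves the ODE `v'''' - A v'' + B v = g(v)` on all of `ℝ`. -/
def IsSol (A B : ℝ) (g v : ℝ → ℝ) : Prop :=
  ∀ t : ℝ, iteratedDeriv 4 v t - A * iteratedDeriv 2 v t + B * v t = g (v t)

/-!
If a fourth-order supersolution `v'''' > A v''` (valid above the level `a`) starts at or above `a`
with nonnegative derivatives, and either its value exceeds `a` or its second derivative is positive,
then `v''` can never return to `0`: as long as `v'' > 0`, integrating upwards gives `v' > 0` and
`v > a`, so `v'''' > 0`, and integrating once more makes `v''` increase. Hence `v` is eventually
convex and increasing and tends to infinity.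

For a solution `v` starting at or above `a₀`, the superlinear growth of `g` then gives
`v'''' ≥ c v ^ q` for large times; repeatedly multiplying by `v'` and integrating reduces this to
`v' ≥ c' v ^ p` with `p > 1`, whose solutions blow up in finite time. For a solution starting at or
below `a₀`, the argument applies to `-v`, which would tend to infinity while `v > 0`. So `v` has the
Cauchy data of the equilibrium `a₀`, and uniqueness for the initial value problem concludes.
-/

open scoped Topology

section Calculus

variable {E : Type*} [NormedAddCommGroup E] [NormedSpace ℝ E]

lemma hasDerivAt_iteratedDeriv {m k : ℕ} {u : ℝ → E} (hu : ContDiff ℝ m u) (hk : k < m) (t : ℝ) :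
    HasDerivAt (iteratedDeriv k u) (iteratedDeriv (k + 1) u t) t := by
  rw [iteratedDeriv_succ]
  exact (hu.differentiable_iteratedDeriv k (mod_cast hk) t).hasDerivAt

lemma tendsto_atTop_of_pos_le_deriv {f f' : ℝ → ℝ} {s c : ℝ} (hc : 0 < c)
    (hf : ∀ t ≥ s, HasDerivAt f (f' t) t) (hf' : ∀ t ≥ s, c ≤ f' t) : Tendsto f atTop atTop := by
  have linear_lower_bound : ∀ t ≥ s, c * (t - s) + f s ≤ f t := fun t ht ↦ by
    have := (convex_Ici s).mul_sub_le_image_sub_of_le_deriv (C := c)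
      (fun x hx ↦ (hf x hx).continuousAt.continuousWithinAt)
      (fun x hx ↦ (hf x (interior_subset hx)).differentiableAt.differentiableWithinAt)
      (fun x hx ↦ (hf x (interior_subset hx)).deriv ▸ hf' x (interior_subset hx))
      s self_mem_Ici t ht ht
    linarith
  refine tendsto_atTop_mono' atTop ((eventually_ge_atTop s).mono linear_lower_bound) ?_
  exact tendsto_atTop_add_const_right _ _
    ((tendsto_atTop_add_const_right _ (-s) tendsto_id).const_mul_atTop hc)

lemma tendsto_atTop_of_iteratedDeriv_two_pos {f : ℝ → ℝ} {s : ℝ} (hf : ContDiff ℝ 2 f)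
    (h1 : 0 < deriv f s) (h2 : ∀ t > s, 0 < iteratedDeriv 2 f t) : Tendsto f atTop atTop := by
  have deriv_mono : StrictMonoOn (deriv f) (Ici s) := by
    refine strictMonoOn_of_deriv_pos (convex_Ici s) (hf.continuous_deriv one_le_two).continuousOn
      fun x hx ↦ ?_
    rw [interior_Ici] at hx
    simpa only [iteratedDeriv_succ, iteratedDeriv_zero] using h2 x hx
  exact tendsto_atTop_of_pos_le_deriv h1
    (fun t _ ↦ (hf.differentiable two_ne_zero t).hasDerivAt)
    fun t ht ↦ deriv_mono.monotoneOn self_mem_Ici ht ht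

lemma exists_pos_mul_le_of_mul_deriv_le {F F' G G' : ℝ → ℝ} {s k : ℝ} (hk : 0 < k)
    (hF : ∀ t ≥ s, HasDerivAt F (F' t) t) (hG : ∀ t ≥ s, HasDerivAt G (G' t) t)
    (hFs : 0 < F s) (hGs : 0 < G s) (hG' : ∀ t ≥ s, 0 ≤ G' t)
    (hle : ∀ t ≥ s, k * G' t ≤ F' t) : ∃ k' > 0, ∀ t ≥ s, k' * G t ≤ F t := by
  set k' := min k (F s / G s)
  have hsub : ∀ t ≥ s, HasDerivAt (fun t ↦ F t - k' * G t) (F' t - k' * G' t) t :=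
    fun t ht ↦ (hF t ht).sub ((hG t ht).const_mul k')
  have hmono : MonotoneOn (fun t ↦ F t - k' * G t) (Ici s) := by
    refine monotoneOn_of_deriv_nonneg (convex_Ici s)
      (fun t ht ↦ (hsub t ht).continuousAt.continuousWithinAt)
      (fun t ht ↦ (hsub t (interior_subset ht)).differentiableAt.differentiableWithinAt)
      fun t ht ↦ ?_
    replace ht := interior_subset ht
    rw [(hsub t ht).deriv, sub_nonneg]
    exact (mul_le_mul_of_nonneg_right (min_le_left _ _) (hG' t ht)).trans (hle t ht)
  refine ⟨k', lt_min hk (div_pos hFs hGs), fun t ht ↦ sub_nonneg.1 ?_⟩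
  have initial_le : k' * G s ≤ F s := (le_div_iff₀ hGs).1 (min_le_right _ _)
  exact (sub_nonneg.2 initial_le).trans (hmono self_mem_Ici ht ht)

lemma forall_pos_of_forall_Ioo_pos {f : ℝ → ℝ} {s : ℝ} (hf : Continuous f)
    (hstart : ∀ᶠ x in 𝓝[>] s, 0 < f x) (hstep : ∀ t > s, (∀ x ∈ Ioo s t, 0 < f x) → 0 < f t) :
    ∀ t > s, 0 < f t := by
  by_contra! ⟨T, hT, hfT⟩
  obtain ⟨u, hu, hpos⟩ := mem_nhdsGT_iff_exists_Ioo_subset.1 hstart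
  have huT : u ≤ T := not_lt.1 fun h ↦ (hpos ⟨hT, h⟩).not_ge hfT
  have hcompact : IsCompact (Icc u T ∩ {x | f x ≤ 0}) :=
    isCompact_Icc.inter_right (isClosed_le hf continuous_const)
  obtain ⟨z, ⟨hzmem, hfz⟩, hzleast⟩ := hcompact.exists_isLeast ⟨T, right_mem_Icc.2 huT, hfT⟩
  refine (hstep z (hu.trans_le hzmem.1) fun x hx ↦ ?_).not_ge hfz
  by_contra! hfx
  have hux : u ≤ x := not_lt.1 fun h ↦ (hpos ⟨hx.1, h⟩).not_ge hfx
  exact hx.2.not_ge (hzleast ⟨⟨hux, hx.2.le.trans hzmem.2⟩, hfx⟩)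

end Calculus

section IteratedDerivSign

variable {f : ℝ → ℝ} {m k : ℕ} {s : ℝ}

lemma iteratedDeriv_lt_of_succ_pos {t : ℝ} (hf : ContDiff ℝ m f) (hk : k < m) (hst : s < t)
    (hpos : ∀ x ∈ Ioo s t, 0 < iteratedDeriv (k + 1) f x) :
    iteratedDeriv k f s < iteratedDeriv k f t := by
  refine strictMonoOn_of_deriv_pos (convex_Icc s t)
    (hf.continuous_iteratedDeriv k (mod_cast hk.le)).continuousOn (fun x hx ↦ ?_)
    (left_mem_Icc.2 hst.le) (right_mem_Icc.2 hst.le) hst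
  rw [interior_Icc] at hx
  rw [← iteratedDeriv_succ]
  exact hpos x hx

lemma eventually_iteratedDeriv_pos_of_succ (hf : ContDiff ℝ m f) (hk : k < m)
    (hs : 0 ≤ iteratedDeriv k f s) (hpos : ∀ᶠ x in 𝓝[>] s, 0 < iteratedDeriv (k + 1) f x) :
    ∀ᶠ x in 𝓝[>] s, 0 < iteratedDeriv k f x := by
  obtain ⟨u, hu, hsub⟩ := mem_nhdsGT_iff_exists_Ioo_subset.1 hpos
  filter_upwards [Ioo_mem_nhdsGT hu] with x hx
  exact hs.trans_lt <| iteratedDeriv_lt_of_succ_pos hf hk hx.1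
    fun y hy ↦ hsub ⟨hy.1, hy.2.trans hx.2⟩

end IteratedDerivSign

section Blowup

variable {y : ℝ → ℝ} {s c q : ℝ}

lemma hasDerivAt_rpow_add_one {y' t : ℝ} (hy : HasDerivAt y y' t) (ht : 0 < y t) (r : ℝ) :
    HasDerivAt (fun x ↦ y x ^ (r + 1)) ((r + 1) * (y t ^ r * y')) t := by
  have := hy.rpow_const (p := r + 1) (Or.inl ht.ne')
  rw [add_sub_cancel_right] at this
  exact this.congr_deriv (by ring)

lemma exists_deriv_lt_mul_rpow (hy : Differentiable ℝ y) (hpos : ∀ t ≥ s, 0 < y t) (hc : 0 < c)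
    (hq : 1 < q) : ∃ t ≥ s, deriv y t < c * y t ^ q := by
  by_contra! hle
  have hderiv : ∀ t ≥ s, HasDerivAt (fun x ↦ -y x ^ (-q + 1))
      ((q - 1) * (y t ^ (-q) * deriv y t)) t := fun t ht ↦
    (hasDerivAt_rpow_add_one (hy t).hasDerivAt (hpos t ht) (-q)).neg.congr_deriv (by ring)
  have deriv_lower_bound : ∀ t ≥ s, (q - 1) * c ≤ (q - 1) * (y t ^ (-q) * deriv y t) := by
    intro t ht
    refine mul_le_mul_of_nonneg_left ?_ (sub_pos.2 hq).le
    rw [rpow_neg (hpos t ht).le, inv_mul_eq_div, le_div_iff₀ (rpow_pos_of_pos (hpos t ht) q)]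
    exact hle t ht
  have hlim := tendsto_atTop_of_pos_le_deriv (mul_pos (sub_pos.2 hq) hc) hderiv deriv_lower_bound
  obtain ⟨t, hnonneg, hts⟩ := ((hlim.eventually_ge_atTop 0).and (eventually_ge_atTop s)).exists
  linarith [rpow_pos_of_pos (hpos t hts) (-q + 1)]

-- Multiplying by `y'` and integrating trades one derivative for one more factor of `y` and `y'`.
lemma exists_mul_rpow_le_iteratedDeriv_mul_deriv_pow {m : ℕ} (hy : ContDiff ℝ m y)
    (hpos : ∀ k ≤ m, ∀ t ≥ s, 0 < iteratedDeriv k y t) (hc : 0 < c) (hq : 0 < q)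
    (hle : ∀ t ≥ s, c * y t ^ q ≤ iteratedDeriv m y t) (j : ℕ) :
    ∀ i, i + 1 + j = m →
      ∃ k > 0, ∀ t ≥ s, k * y t ^ (q + j) ≤ iteratedDeriv (i + 1) y t * deriv y t ^ j := by
  induction j with
  | zero =>
    rintro i rfl
    exact ⟨c, hc, by simpa using hle⟩
  | succ j ih =>
    intro i hm
    obtain ⟨k, hk, hlek⟩ := ih (i + 1) (by lia)
    have y_pos : ∀ t ≥ s, 0 < y t := by simpa using hpos 0 (Nat.zero_le m)
    have deriv_pos : ∀ t ≥ s, 0 < deriv y t := by simpa using hpos 1 (by lia)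
    have hderiv : ∀ t, HasDerivAt y (deriv y t) t := fun t ↦ by
      simpa using hasDerivAt_iteratedDeriv hy (k := 0) (by lia) t
    have hderiv2 : ∀ t, HasDerivAt (deriv y) (iteratedDeriv 2 y t) t := fun t ↦ by
      simpa using hasDerivAt_iteratedDeriv hy (k := 1) (by lia) t
    have hr : 0 < q + j + 1 := by positivity
    push_cast
    rw [← add_assoc]
    refine exists_pos_mul_le_of_mul_deriv_le (div_pos hk hr)
      (fun t _ ↦ (hasDerivAt_iteratedDeriv hy (by lia) t).mul ((hderiv2 t).pow (j + 1)))
      (fun t ht ↦ hasDerivAt_rpow_add_one (hderiv t) (y_pos t ht) (q + j))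
      (mul_pos (hpos _ (by lia) s le_rfl) (pow_pos (deriv_pos s le_rfl) _))
      (rpow_pos_of_pos (y_pos s le_rfl) _) (fun t ht ↦ ?_) fun t ht ↦ ?_
    · have := y_pos t ht
      have := deriv_pos t ht
      positivity
    · have hy' := deriv_pos t ht
      have h2 := hpos 2 (by lia) t ht
      have hi := hpos (i + 1) (by lia) t ht
      calc k / (q + j + 1) * ((q + j + 1) * (y t ^ (q + j) * deriv y t))
          = k * y t ^ (q + j) * deriv y t := by field_simp
        _ ≤ iteratedDeriv (i + 1 + 1) y t * deriv y t ^ j * deriv y t :=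
          mul_le_mul_of_nonneg_right (hlek t ht) hy'.le
        _ = iteratedDeriv (i + 1 + 1) y t * deriv y t ^ (j + 1) := by ring
        _ ≤ _ := le_add_of_nonneg_right (by positivity)

theorem exists_iteratedDeriv_lt_mul_rpow {m : ℕ} (hy : ContDiff ℝ (m + 1) y)
    (hpos : ∀ k ≤ m, ∀ t ≥ s, 0 < iteratedDeriv k y t) (hc : 0 < c) (hq : 1 < q) :
    ∃ t ≥ s, iteratedDeriv (m + 1) y t < c * y t ^ q := by
  by_contra! hle
  have y_pos : ∀ t ≥ s, 0 < y t := by simpa using hpos 0 (Nat.zero_le m)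
  have hpos' : ∀ k ≤ m + 1, ∀ t ≥ s, 0 < iteratedDeriv k y t := fun k hk t ht ↦ by
    rcases hk.lt_or_eq with hlt | rfl
    · exact hpos k (Nat.lt_succ_iff.1 hlt) t ht
    · exact (mul_pos hc (rpow_pos_of_pos (y_pos t ht) q)).trans_le (hle t ht)
  obtain ⟨k, hk, hlek⟩ := exists_mul_rpow_le_iteratedDeriv_mul_deriv_pow (mod_cast hy) hpos' hc
    (zero_lt_one.trans hq) hle m 0 (by lia)
  have first_order : ∀ t ≥ s, k ^ (1 / (m + 1) : ℝ) * y t ^ ((q + m) / (m + 1)) ≤ deriv y t := by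
    intro t ht
    have hy' : 0 ≤ deriv y t := by simpa using (hpos' 1 (by lia) t ht).le
    refine le_of_pow_le_pow_left₀ (n := m + 1) m.succ_ne_zero hy' ?_
    calc (k ^ (1 / (m + 1) : ℝ) * y t ^ ((q + m) / (m + 1))) ^ (m + 1)
        = k * y t ^ (q + m) := by
          rw [mul_pow, ← rpow_mul_natCast hk.le, ← rpow_mul_natCast (y_pos t ht).le]
          push_cast
          rw [div_mul_cancel₀ _ (by positivity), div_mul_cancel₀ _ (by positivity), rpow_one]
      _ ≤ iteratedDeriv (0 + 1) y t * deriv y t ^ m := hlek t ht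
      _ = deriv y t ^ (m + 1) := by rw [zero_add, iteratedDeriv_one, pow_succ']
  obtain ⟨t, ht, hlt⟩ := exists_deriv_lt_mul_rpow (q := (q + m) / (m + 1))
    (hy.differentiable (by simp)) y_pos (rpow_pos_of_pos hk (1 / (m + 1) : ℝ))
    ((one_lt_div (by positivity)).2 (by linarith))
  exact hlt.not_ge (first_order t ht)

end Blowup

section Uniqueness

variable {E : Type*} [NormedAddCommGroup E] [NormedSpace ℝ E]

theorem isIntegralCurve_eq_of_locallyLipschitzOn {F : E → E} {S : Set E} {γ δ : ℝ → E} {t₀ : ℝ}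
    (hF : LocallyLipschitzOn S F) (hγ : IsIntegralCurve γ fun _ ↦ F)
    (hδ : IsIntegralCurve δ fun _ ↦ F) (hγS : ∀ t, γ t ∈ S) (hδS : ∀ t, δ t ∈ S)
    (h₀ : γ t₀ = δ t₀) : γ = δ := by
  funext t
  obtain ⟨a, b, ht, ht₀⟩ : ∃ a b, t ∈ Ioo a b ∧ t₀ ∈ Ioo a b :=
    ⟨min t t₀ - 1, max t t₀ + 1, by grind, by grind⟩
  have hcompact : IsCompact (γ '' Icc a b ∪ δ '' Icc a b) :=
    (isCompact_Icc.image hγ.continuous).union (isCompact_Icc.image hδ.continuous)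
  have hsub : γ '' Icc a b ∪ δ '' Icc a b ⊆ S :=
    union_subset (image_subset_iff.2 fun x _ ↦ hγS x) (image_subset_iff.2 fun x _ ↦ hδS x)
  obtain ⟨K, hK⟩ := (hF.mono hsub).exists_lipschitzOnWith_of_compact hcompact
  exact ODE_solution_unique_of_mem_Ioo (fun _ _ ↦ hK) ht₀
    (fun x hx ↦ ⟨hγ x, .inl (mem_image_of_mem γ (Ioo_subset_Icc_self hx))⟩)
    (fun x hx ↦ ⟨hδ x, .inr (mem_image_of_mem δ (Ioo_subset_Icc_self hx))⟩) h₀ ht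

/-- The phase-space curve `(u, u', …, u⁽ᵐ⁻¹⁾)`, used to turn an equation of order `m` into a
first-order system. -/
def jet (m : ℕ) (u : ℝ → E) (t : ℝ) : Fin m → E := fun i ↦ iteratedDeriv i u t

/-- The first-order system `(x₀, …, xₘ)' = (x₁, …, xₘ, Φ x)` associated with the equation
`u⁽ᵐ⁺¹⁾ = Φ(u, u', …, u⁽ᵐ⁾)`. -/
def companionField {X : Type*} {m : ℕ} (Φ : (Fin (m + 1) → X) → X) (x : Fin (m + 1) → X) :
    Fin (m + 1) → X :=
  Fin.snoc (Fin.tail x) (Φ x)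

lemma isIntegralCurve_jet {m : ℕ} {Φ : (Fin (m + 1) → E) → E} {u : ℝ → E}
    (hu : ContDiff ℝ (m + 1) u) (hsol : ∀ t, iteratedDeriv (m + 1) u t = Φ (jet (m + 1) u t)) :
    IsIntegralCurve (jet (m + 1) u) fun _ ↦ companionField Φ := by
  intro t
  rw [hasDerivAt_pi]
  intro i
  refine (hasDerivAt_iteratedDeriv (mod_cast hu) i.isLt t).congr_deriv ?_
  cases i using Fin.lastCases with
  | last => simpa [companionField] using hsol t
  | cast i => simp [companionField, jet, Fin.tail]

lemma locallyLipschitzOn_companionField {X : Type*} [PseudoEMetricSpace X] {m : ℕ}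
    {Φ : (Fin (m + 1) → X) → X} {S : Set (Fin (m + 1) → X)} (hΦ : LocallyLipschitzOn S Φ) :
    LocallyLipschitzOn S (companionField Φ) := by
  intro x hx
  obtain ⟨K, t, ht, hK⟩ := hΦ hx
  refine ⟨max 1 K, t, ht, fun y hy z hz ↦ edist_pi_le_iff.2 fun i ↦ ?_⟩
  cases i using Fin.lastCases with
  | last =>
    simp only [companionField, Fin.snoc_last]
    exact (hK hy hz).trans (by gcongr; exact le_max_right _ _)
  | cast i =>
    simp only [companionField, Fin.snoc_castSucc, Fin.tail]
    exact (edist_le_pi_edist y z i.succ).trans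
      (le_mul_of_one_le_left' (by exact_mod_cast le_max_left 1 K))

theorem eq_of_iteratedDeriv_eq_of_jet_eq {m : ℕ} {Φ : (Fin (m + 1) → E) → E}
    {S : Set (Fin (m + 1) → E)} {u v : ℝ → E} {t₀ : ℝ} (hΦ : LocallyLipschitzOn S Φ)
    (hu : ContDiff ℝ (m + 1) u) (hv : ContDiff ℝ (m + 1) v)
    (huΦ : ∀ t, iteratedDeriv (m + 1) u t = Φ (jet (m + 1) u t))
    (hvΦ : ∀ t, iteratedDeriv (m + 1) v t = Φ (jet (m + 1) v t))
    (huS : ∀ t, jet (m + 1) u t ∈ S) (hvS : ∀ t, jet (m + 1) v t ∈ S)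
    (h₀ : jet (m + 1) u t₀ = jet (m + 1) v t₀) : u = v := by
  have jet_eq := isIntegralCurve_eq_of_locallyLipschitzOn (locallyLipschitzOn_companionField hΦ)
    (isIntegralCurve_jet hu huΦ) (isIntegralCurve_jet hv hvΦ) huS hvS h₀
  funext t
  simpa [jet] using congrFun (congrFun jet_eq t) 0

lemma locallyLipschitzOn_comp {α β γ : Type*} [PseudoEMetricSpace α] [PseudoEMetricSpace β]
    [PseudoEMetricSpace γ] {g : β → γ} {f : α → β} {s : Set α} {t : Set β}
    (hg : LocallyLipschitzOn t g) (hf : LocallyLipschitzOn s f) (hst : MapsTo f s t) :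
    LocallyLipschitzOn s (g ∘ f) := by
  intro x hx
  obtain ⟨Kf, U, hU, hfU⟩ := hf hx
  obtain ⟨Kg, V, hV, hgV⟩ := hg (hst hx)
  have hpre : f ⁻¹' V ∈ 𝓝[s] x := (hf.continuousOn x hx).tendsto_nhdsWithin hst hV
  exact ⟨Kg * Kf, U ∩ f ⁻¹' V, inter_mem hU hpre,
    hgV.comp (hfU.mono inter_subset_left) fun _ hy ↦ hy.2⟩

end Uniqueness

section FourthOrderInequality

variable {A a s : ℝ} {v : ℝ → ℝ}

lemma lt_and_iteratedDeriv_pos_of_Ioo {t : ℝ} (hA : 0 ≤ A) (hv : ContDiff ℝ 4 v)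
    (hsuper : ∀ x, a < v x → A * iteratedDeriv 2 v x < iteratedDeriv 4 v x) (h0 : a ≤ v s)
    (hder : ∀ k ∈ Icc 1 3, 0 ≤ iteratedDeriv k v s) (hst : s < t)
    (h2 : ∀ x ∈ Ioo s t, 0 < iteratedDeriv 2 v x) :
    a < v t ∧ ∀ k ∈ Icc 1 3, 0 < iteratedDeriv k v t := by
  have pos_of_succ : ∀ k ∈ Icc 1 3, (∀ x ∈ Ioo s t, 0 < iteratedDeriv (k + 1) v x) →
      ∀ x ∈ Ioc s t, 0 < iteratedDeriv k v x := fun k hk hpos x hx ↦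
    (hder k hk).trans_lt <| iteratedDeriv_lt_of_succ_pos hv (Nat.lt_succ_iff.2 hk.2) hx.1
      fun y hy ↦ hpos y ⟨hy.1, hy.2.trans_le hx.2⟩
  have v1_pos : ∀ x ∈ Ioc s t, 0 < iteratedDeriv 1 v x := pos_of_succ 1 (by simp) h2
  have lt_v : ∀ x ∈ Ioc s t, a < v x := fun x hx ↦ by
    simpa only [iteratedDeriv_zero] using h0.trans_lt <|
      iteratedDeriv_lt_of_succ_pos (k := 0) hv (by simp) hx.1
        fun y hy ↦ v1_pos y ⟨hy.1, hy.2.le.trans hx.2⟩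
  have v4_pos : ∀ x ∈ Ioo s t, 0 < iteratedDeriv 4 v x := fun x hx ↦
    (mul_nonneg hA (h2 x hx).le).trans_lt (hsuper x (lt_v x (Ioo_subset_Ioc_self hx)))
  have v3_pos : ∀ x ∈ Ioc s t, 0 < iteratedDeriv 3 v x := pos_of_succ 3 (by simp) v4_pos
  have v2_pos : ∀ x ∈ Ioc s t, 0 < iteratedDeriv 2 v x :=
    pos_of_succ 2 (by simp) fun x hx ↦ v3_pos x (Ioo_subset_Ioc_self hx)
  have ht : t ∈ Ioc s t := right_mem_Ioc.2 hst
  refine ⟨lt_v t ht, fun k hk ↦ ?_⟩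
  obtain rfl | rfl | rfl : k = 1 ∨ k = 2 ∨ k = 3 := by grind
  exacts [v1_pos t ht, v2_pos t ht, v3_pos t ht]

lemma eventually_iteratedDeriv_two_pos (hA : 0 ≤ A) (hv : ContDiff ℝ 4 v)
    (hsuper : ∀ x, a < v x → A * iteratedDeriv 2 v x < iteratedDeriv 4 v x)
    (h2 : 0 ≤ iteratedDeriv 2 v s) (h3 : 0 ≤ iteratedDeriv 3 v s)
    (hne : a < v s ∨ 0 < iteratedDeriv 2 v s) : ∀ᶠ x in 𝓝[>] s, 0 < iteratedDeriv 2 v x := by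
  have eventually_pos : ∀ k ≤ 4, 0 < iteratedDeriv k v s →
      ∀ᶠ x in 𝓝[>] s, 0 < iteratedDeriv k v x := fun k hk hpos ↦
    ((hv.continuous_iteratedDeriv k (mod_cast hk)).continuousAt.eventually_const_lt
      hpos).filter_mono nhdsWithin_le_nhds
  rcases hne with hs | hs
  · have v4_pos : 0 < iteratedDeriv 4 v s := (mul_nonneg hA h2).trans_lt (hsuper s hs)
    exact eventually_iteratedDeriv_pos_of_succ hv (by simp) h2 <|
      eventually_iteratedDeriv_pos_of_succ hv (by simp) h3 <| eventually_pos 4 le_rfl v4_pos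
  · exact eventually_pos 2 (by simp) hs

theorem lt_and_iteratedDeriv_pos (hA : 0 ≤ A) (hv : ContDiff ℝ 4 v)
    (hsuper : ∀ x, a < v x → A * iteratedDeriv 2 v x < iteratedDeriv 4 v x) (h0 : a ≤ v s)
    (hder : ∀ k ∈ Icc 1 3, 0 ≤ iteratedDeriv k v s)
    (hne : a < v s ∨ 0 < iteratedDeriv 2 v s) :
    ∀ t > s, a < v t ∧ ∀ k ∈ Icc 1 3, 0 < iteratedDeriv k v t := by
  have v2_pos : ∀ t > s, 0 < iteratedDeriv 2 v t :=
    forall_pos_of_forall_Ioo_pos (hv.continuous_iteratedDeriv 2 (by norm_num))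
      (eventually_iteratedDeriv_two_pos hA hv hsuper (hder 2 (by simp)) (hder 3 (by simp)) hne)
      fun t ht h2 ↦
        (lt_and_iteratedDeriv_pos_of_Ioo hA hv hsuper h0 hder ht h2).2 2 (by simp)
  exact fun t ht ↦
    lt_and_iteratedDeriv_pos_of_Ioo hA hv hsuper h0 hder ht fun x hx ↦ v2_pos x hx.1

theorem tendsto_atTop_of_mul_iteratedDeriv_two_lt (hA : 0 ≤ A) (hv : ContDiff ℝ 4 v)
    (hsuper : ∀ x, a < v x → A * iteratedDeriv 2 v x < iteratedDeriv 4 v x) (h0 : a ≤ v s)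
    (hder : ∀ k ∈ Icc 1 3, 0 ≤ iteratedDeriv k v s)
    (hne : a < v s ∨ 0 < iteratedDeriv 2 v s) : Tendsto v atTop atTop := by
  have hpos := lt_and_iteratedDeriv_pos hA hv hsuper h0 hder hne
  refine tendsto_atTop_of_iteratedDeriv_two_pos (s := s + 1) (hv.of_le (by norm_num)) ?_
    fun t ht ↦ (hpos t (by linarith)).2 2 (by simp)
  simpa only [iteratedDeriv_one] using (hpos (s + 1) (by linarith)).2 1 (by simp)

end FourthOrderInequality

lemma eventually_mul_le_mul_rpow {c q : ℝ} (hc : 0 < c) (hq : 1 < q) (b : ℝ) :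
    ∀ᶠ x in atTop, b * x ≤ c * x ^ q := by
  filter_upwards [(tendsto_rpow_atTop (sub_pos.2 hq)).eventually_ge_atTop (b / c),
    eventually_gt_atTop 0] with x hx hx0
  calc b * x ≤ x ^ (q - 1) * c * x := by gcongr; exact (div_le_iff₀ hc).1 hx
    _ = c * x ^ q := by rw [rpow_sub_one hx0.ne']; field_simp

namespace IsSol

variable {A B a s : ℝ} {g v : ℝ → ℝ}

lemma iteratedDeriv_four_eq (hsol : IsSol A B g v) (t : ℝ) :
    iteratedDeriv 4 v t = A * iteratedDeriv 2 v t - B * v t + g (v t) := by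
  linarith [hsol t]

theorem eq_const_of_initial_eq (hsol : IsSol A B g v) (hg : LocallyLipschitzOn (Ioi 0) g)
    (hga : g a = B * a) (hv : ContDiff ℝ 4 v) (hvpos : ∀ t, 0 < v t) (h0 : v s = a)
    (hder : ∀ k ∈ Icc 1 3, iteratedDeriv k v s = 0) : v = fun _ ↦ a := by
  let Φ : (Fin 4 → ℝ) → ℝ := fun x ↦ A * x 2 - B * x 0 + g (x 0)
  have hΦ : LocallyLipschitzOn {x | 0 < x 0} Φ := by
    have hlin : ContDiff ℝ 1 fun x : Fin 4 → ℝ ↦ A * x 2 - B * x 0 := by fun_prop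
    have heval : LocallyLipschitz fun x : Fin 4 → ℝ ↦ x 0 :=
      (LipschitzWith.eval 0).locallyLipschitz
    exact hlin.locallyLipschitz.locallyLipschitzOn.add <|
      locallyLipschitzOn_comp hg heval.locallyLipschitzOn fun _ hx ↦ hx
  refine eq_of_iteratedDeriv_eq_of_jet_eq (t₀ := s) hΦ hv contDiff_const
    hsol.iteratedDeriv_four_eq (fun t ↦ ?_) (fun t ↦ ?_) (fun t ↦ ?_) ?_
  · simp [Φ, jet, hga, iteratedDeriv_const]
  · simpa [jet] using hvpos t
  · simpa [jet, h0] using hvpos s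
  · funext i
    fin_cases i <;> simp [jet, h0, hder, iteratedDeriv_const]

theorem initial_eq_of_ge (hsol : IsSol A B g v) (hA : 0 ≤ A) (hgt : ∀ x > a, B * x < g x)
    {q c : ℝ} (hq : 1 < q) (hc : 0 < c) (hgrowth : ∀ᶠ x in atTop, c * x ^ q ≤ g x)
    (hv : ContDiff ℝ 4 v) (hvpos : ∀ t, 0 < v t) (h0 : a ≤ v s)
    (hder : ∀ k ∈ Icc 1 3, 0 ≤ iteratedDeriv k v s) : v s = a ∧ iteratedDeriv 2 v s = 0 := by
  by_contra hne
  have hstrict : a < v s ∨ 0 < iteratedDeriv 2 v s := by grind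
  have hsuper : ∀ t, a < v t → A * iteratedDeriv 2 v t < iteratedDeriv 4 v t := fun t ht ↦ by
    linarith [hsol t, hgt _ ht]
  have hpos := lt_and_iteratedDeriv_pos hA hv hsuper h0 hder hstrict
  have hlim := tendsto_atTop_of_mul_iteratedDeriv_two_lt hA hv hsuper h0 hder hstrict
  obtain ⟨T, hT⟩ := eventually_atTop.1 <| hlim.eventually <|
    hgrowth.and (eventually_mul_le_mul_rpow (half_pos hc) hq B)
  have lt_of_ge : ∀ t ≥ max T (s + 1), s < t := fun t ht ↦
    (lt_add_one s).trans_le ((le_max_right T _).trans ht)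
  have derivs_pos : ∀ k ≤ 3, ∀ t ≥ max T (s + 1), 0 < iteratedDeriv k v t := fun k hk t ht ↦ by
    rcases k.eq_zero_or_pos with rfl | hk0
    · simpa only [iteratedDeriv_zero] using hvpos t
    · exact (hpos t (lt_of_ge t ht)).2 k ⟨hk0, hk⟩
  obtain ⟨t, ht, hlt⟩ := exists_iteratedDeriv_lt_mul_rpow (m := 3) hv derivs_pos (half_pos hc) hq
  have h2 : 0 ≤ A * iteratedDeriv 2 v t :=
    mul_nonneg hA (derivs_pos 2 (by simp) t ht).le
  obtain ⟨hgv, hBv⟩ := hT t ((le_max_left T _).trans ht)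
  linarith [hsol t]

theorem initial_eq_of_le (hsol : IsSol A B g v) (hA : 0 ≤ A) (hlt : ∀ x ∈ Ioo 0 a, g x < B * x)
    (hv : ContDiff ℝ 4 v) (hvpos : ∀ t, 0 < v t) (h0 : v s ≤ a)
    (hder : ∀ k ∈ Icc 1 3, iteratedDeriv k v s ≤ 0) : v s = a ∧ iteratedDeriv 2 v s = 0 := by
  by_contra hne
  have hstrict : v s < a ∨ iteratedDeriv 2 v s < 0 := by grind
  have hlim : Tendsto (-v) atTop atTop := by
    refine tendsto_atTop_of_mul_iteratedDeriv_two_lt (a := -a) (s := s) hA hv.neg (fun t ht ↦ ?_)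
      (neg_le_neg h0) (by simpa only [iteratedDeriv_neg, neg_nonneg] using hder)
      (by simpa only [iteratedDeriv_neg, Pi.neg_apply, neg_lt_neg_iff, neg_pos] using hstrict)
    simp only [iteratedDeriv_neg]
    linarith [hsol t, hlt (v t) ⟨hvpos t, neg_lt_neg_iff.1 ht⟩]
  obtain ⟨t, ht⟩ := (hlim.eventually_ge_atTop 0).exists
  exact (hvpos t).not_ge (neg_nonneg.1 ht)

end IsSol

lemma strictMonoOn_div_self_of_lt_deriv {g : ℝ → ℝ} (hg : DifferentiableOn ℝ g (Ioi 0))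
    (hlt : ∀ t > 0, g t / t < deriv g t) : StrictMonoOn (fun t ↦ g t / t) (Ioi 0) := by
  have hderiv : ∀ t > 0, HasDerivAt (fun t ↦ g t / t) ((deriv g t * t - g t * 1) / t ^ 2) t :=
    fun t ht ↦ ((hg.differentiableAt (Ioi_mem_nhds ht)).hasDerivAt).div (hasDerivAt_id t) ht.ne'
  refine strictMonoOn_of_deriv_pos (convex_Ioi 0)
    (fun t ht ↦ (hderiv t ht).continuousAt.continuousWithinAt) fun t ht ↦ ?_
  replace ht : 0 < t := interior_subset ht
  have hlt' : g t < deriv g t * t := (div_lt_iff₀ ht).1 (hlt t ht)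
  rw [(hderiv t ht).deriv]
  exact div_pos (by linarith) (pow_pos ht 2)

namespace CondG

variable {n : ℕ} {g : ℝ → ℝ} {a B : ℝ}

lemma locallyLipschitzOn (hg : CondG n g) : LocallyLipschitzOn (Ioi 0) g :=
  hg.1.locallyLipschitzOn (convex_Ioi 0)

lemma strictMonoOn_div_self (hg : CondG n g) : StrictMonoOn (fun t ↦ g t / t) (Ioi 0) :=
  strictMonoOn_div_self_of_lt_deriv (hg.1.differentiableOn one_ne_zero)
    fun t ht ↦ (hg.2.2.2.1 t ht).1

lemma lt_mul_of_mem_Ioo (hg : CondG n g) (hga : g a = B * a) : ∀ x ∈ Ioo 0 a, g x < B * x := by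
  intro x hx
  have ha : 0 < a := hx.1.trans hx.2
  have hratio : g x / x < g a / a := hg.strictMonoOn_div_self hx.1 ha hx.2
  rwa [hga, mul_div_cancel_right₀ B ha.ne', div_lt_iff₀ hx.1] at hratio

lemma mul_lt_of_gt (hg : CondG n g) (ha : 0 < a) (hga : g a = B * a) : ∀ x > a, B * x < g x := by
  intro x hx
  have hratio : g a / a < g x / x := hg.strictMonoOn_div_self ha (ha.trans hx) hx
  rwa [hga, mul_div_cancel_right₀ B ha.ne', lt_div_iff₀ (ha.trans hx)] at hratio

lemma exists_eventually_mul_rpow_le (hg : CondG n g) :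
    ∃ q > (1 : ℝ), ∃ c > 0, ∀ᶠ x in atTop, c * x ^ q ≤ g x := by
  obtain ⟨-, -, -, -, -, ⟨q, c, hq, hc, hle⟩, -⟩ := hg
  exact ⟨q, hq, c, hc, (eventually_ge_atTop 1).mono hle⟩

end CondG

theorem stmt_12_general {A B a : ℝ} {g v : ℝ → ℝ} (hA : 0 ≤ A)
    (hg : LocallyLipschitzOn (Ioi 0) g) (hlt : ∀ x ∈ Ioo 0 a, g x < B * x) (hga : g a = B * a)
    (hgt : ∀ x > a, B * x < g x) (hgrowth : ∃ q > (1 : ℝ), ∃ c > 0, ∀ᶠ x in atTop, c * x ^ q ≤ g x)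
    (hv : ContDiff ℝ 4 v) (hvpos : ∀ t, 0 < v t) (hsol : IsSol A B g v)
    (h1 : deriv v 0 = 0) (h3 : iteratedDeriv 3 v 0 = 0)
    (hcase : (a ≤ v 0 ∧ 0 ≤ iteratedDeriv 2 v 0) ∨ (v 0 ≤ a ∧ iteratedDeriv 2 v 0 ≤ 0)) :
    ∀ t, v t = a := by
  obtain ⟨q, hq, c, hc, hgrowth⟩ := hgrowth
  have forall_derivs {P : ℝ → Prop} (hP : P 0) (h2 : P (iteratedDeriv 2 v 0)) :
      ∀ k ∈ Icc 1 3, P (iteratedDeriv k v 0) := fun k hk ↦ by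
    obtain rfl | rfl | rfl : k = 1 ∨ k = 2 ∨ k = 3 := by grind
    exacts [by rwa [iteratedDeriv_one, h1], h2, by rwa [h3]]
  obtain ⟨v0_eq, v2_eq⟩ : v 0 = a ∧ iteratedDeriv 2 v 0 = 0 := by
    rcases hcase with ⟨h0, h2⟩ | ⟨h0, h2⟩
    · exact hsol.initial_eq_of_ge hA hgt hq hc hgrowth hv hvpos h0 (forall_derivs le_rfl h2)
    · exact hsol.initial_eq_of_le hA hlt hv hvpos h0 (forall_derivs (P := (· ≤ 0)) le_rfl h2)
  exact congrFun <| hsol.eq_const_of_initial_eq hg hga hv hvpos v0_eq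
    (forall_derivs (P := (· = 0)) rfl v2_eq)

theorem stmt_12 (n : ℕ) (hn : 5 ≤ n) (g : ℝ → ℝ) (hg : CondG n g)
    (A B : ℝ) (hA : A = ((n : ℝ) * ((n : ℝ) - 4) + 8) / 2)
    (hB : B = (n : ℝ) ^ 2 * ((n : ℝ) - 4) ^ 2 / 16)
    (a₀ : ℝ) (ha₀ : 0 < a₀) (hga₀ : g a₀ = B * a₀)
    (v : ℝ → ℝ) (hv4 : ContDiff ℝ 4 v) (hvpos : ∀ t, 0 < v t) (hvsol : IsSol A B g v)
    (h1 : deriv v 0 = 0) (h3 : iteratedDeriv 3 v 0 = 0)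
    (hcase : (a₀ ≤ v 0 ∧ 0 ≤ iteratedDeriv 2 v 0) ∨ (v 0 ≤ a₀ ∧ iteratedDeriv 2 v 0 ≤ 0)) :
    ∀ t, v t = a₀ := by
  have hA_nonneg : 0 ≤ A := by rw [hA]; nlinarith [sq_nonneg ((n : ℝ) - 2)]
  exact stmt_12_general hA_nonneg hg.locallyLipschitzOn (hg.lt_mul_of_mem_Ioo hga₀) hga₀
    (hg.mul_lt_of_gt ha₀ hga₀) hg.exists_eventually_mul_rpow_le hv4 hvpos hvsol h1 h3 hcase
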